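/- Let d ≥ 2 and let X ⊆ ℝ^d be a nonempty polyhedral hypersurface, i.e. the bend locus of a convex PL function f(x) = max_{1≤i≤r}(⟨x, b_i⟩ + a_i). Then the one-point compactification of X is (d−2)-connected. -/

import Mathlib

open scoped RealInnerProductSpace

/-- The convex PL function `x ↦ max_{1 ≤ i ≤ r} (⟪x, b i⟫ + a i)` (an `iSup` over the
nonempty finite index type `Fin r`, hence a maximum). -/
noncomputable def plMax {d r : ℕ} (b : Fin r → EuclideanSpace ℝ (Fin d)) (a : Fin r → ℝ) :
    EuclideanSpace ℝ (Fin d) → ℝ :=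
  fun x => ⨆ i : Fin r, (⟪x, b i⟫ + a i)

/-- The bend locus of a convex PL function: the set of points where it is not differentiable. -/
def bendLocus {d r : ℕ} (b : Fin r → EuclideanSpace ℝ (Fin d)) (a : Fin r → ℝ) :
    Set (EuclideanSpace ℝ (Fin d)) :=
  {x | ¬ DifferentiableAt ℝ (plMax b a) x}

/-- A topological space `Y` is `m`-connected (`m ≥ 0`): it is nonempty, path-connected,
and all homotopy groups `π_k(Y, y)` for `1 ≤ k ≤ m` and all basepoints `y` are trivial. -/
def SpaceMConnected (m : ℕ) (Y : Type*) [TopologicalSpace Y] : Prop :=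
  Nonempty Y ∧ PathConnectedSpace Y ∧
    ∀ k : ℕ, 1 ≤ k → k ≤ m → ∀ y : Y, Subsingleton (HomotopyGroup (Fin k) Y y)

/-!
The complement of the bend locus `X` in `ℝ^d` is a finite nonempty disjoint union of open convex
cells, the regions where a single affine piece is maximal. Projecting each nonempty cell radially
from one of its points `p` onto its frontier, and sending to `∞` the points whose ray never leaves
the cell, gives a retraction onto `X ∪ {∞}` of the sphere `ℝ^d ∪ {∞}` minus the finitely many points
`p`. It is continuous at `∞` and at the points sent there because the distance of the image of `x`
to `p` is at least that of `x`, and tends to infinity as the exit time along the ray does.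
Stereographic projection from one of the points `p` identifies the punctured sphere with `ℝ^d` minus
a finite set. There a `k`-dimensional loop with `k ≤ d - 2` can be made smooth and contracted along
segments, and a generic smooth perturbation of this `(k + 1)`-dimensional contraction avoids the
finite set by a dimension count. A retract of a `(d - 2)`-connected space is `(d - 2)`-connected.
-/

section HomotopyGroup

open scoped Topology.Homotopy

variable {N X Y : Type*} [TopologicalSpace X] [TopologicalSpace Y]

lemma subsingleton_homotopyGroup_iff {x : X} :
    Subsingleton (HomotopyGroup N X x) ↔ ∀ f g : Ω^ N X x, GenLoop.Homotopic f g := by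
  refine ⟨fun h f g => ?_,
    fun h => ⟨fun u v => Quotient.inductionOn₂ u v fun f g => Quotient.sound (h f g)⟩⟩
  exact Quotient.exact (h.elim (Quotient.mk (GenLoop.Homotopic.setoid N x) f) (Quotient.mk _ g))

/-- The map `Ω^N X x → Ω^N Y (J x)` induced by a continuous map `J : X → Y`, used to compare the
homotopy groups of a space with those of its retracts. -/
def genLoopMap (J : C(X, Y)) {x : X} (f : Ω^ N X x) : Ω^ N Y (J x) :=
  ⟨J.comp f.1, fun s hs => congrArg J (f.2 s hs)⟩

lemma subsingleton_homotopyGroup_of_leftInverse {J : C(Y, X)} {R : C(X, Y)}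
    (hRJ : Function.LeftInverse R J) {y : Y} (h : Subsingleton (HomotopyGroup N X (J y))) :
    Subsingleton (HomotopyGroup N Y y) := by
  rw [subsingleton_homotopyGroup_iff] at h ⊢
  intro f g
  have comp_genLoopMap (f : Ω^ N Y y) : R.comp (genLoopMap J f).1 = f.1 :=
    ContinuousMap.ext fun s => hRJ (f s)
  have hR := (h (genLoopMap J f) (genLoopMap J g)).comp_continuousMap R
  rwa [comp_genLoopMap, comp_genLoopMap] at hR

theorem SpaceMConnected.of_leftInverse {m : ℕ} (hX : SpaceMConnected m X) {J : C(Y, X)}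
    {R : C(X, Y)} (hRJ : Function.LeftInverse R J) : SpaceMConnected m Y := by
  obtain ⟨-, hpath, hπ⟩ := hX
  have hY : PathConnectedSpace Y := hRJ.surjective.pathConnectedSpace R.continuous
  exact ⟨hY.nonempty, hY, fun k hk hkm y =>
    subsingleton_homotopyGroup_of_leftInverse hRJ (hπ k hk hkm (J y))⟩

theorem SpaceMConnected.of_homeomorph {m : ℕ} (hX : SpaceMConnected m X) (e : X ≃ₜ Y) :
    SpaceMConnected m Y :=
  hX.of_leftInverse (J := e.symm) (R := e) e.apply_symm_apply

end HomotopyGroup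

section CountableComplement

open scoped unitInterval Topology.Homotopy
open Set Topology Module

variable {E : Type*} [NormedAddCommGroup E] [NormedSpace ℝ E]

lemma exists_forall_add_smul_notMem [FiniteDimensional ℝ E] {V : Type*} [NormedAddCommGroup V]
    [NormedSpace ℝ V] [FiniteDimensional ℝ V] {h : V → E} {ψ : V → ℝ} {F : Set E}
    (hh : ContDiff ℝ 1 h) (hψ : ContDiff ℝ 1 ψ) (hF : F.Countable)
    (hVE : finrank ℝ V < finrank ℝ E) :
    ∃ v : E, ∀ z, ψ z ≠ 0 → h z + ψ z • v ∉ F := by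
  -- `h z + ψ z • v = q` forces `v = (ψ z)⁻¹ • (q - h z)`, and these `v` form a set of dimension
  -- at most `dim V`.
  let bad (q : E) : Set E := (fun z => (ψ z)⁻¹ • (q - h z)) '' {z | ψ z ≠ 0}
  have dimH_bad (q : E) : dimH (bad q) ≤ finrank ℝ V := by
    rw [← Real.dimH_univ_eq_finrank V]
    refine (dimH_image_le_of_locally_lipschitzOn fun z hz => ?_).trans (dimH_mono (subset_univ _))
    have hsmooth : ContDiffAt ℝ 1 (fun z => (ψ z)⁻¹ • (q - h z)) z :=
      (hψ.contDiffAt.inv hz).smul (contDiffAt_const.sub hh.contDiffAt)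
    obtain ⟨K, t, ht, hK⟩ := hsmooth.exists_lipschitzOnWith
    exact ⟨K, t, mem_nhdsWithin_of_mem_nhds ht, hK⟩
  have hdim : dimH (⋃ q ∈ F, bad q) < finrank ℝ E := by
    rw [dimH_bUnion hF]
    exact (iSup₂_le fun q _ => dimH_bad q).trans_lt (by exact_mod_cast hVE)
  obtain ⟨v, hv⟩ := (dense_compl_of_dimH_lt_finrank hdim).nonempty
  refine ⟨v, fun z hz hmem => hv (mem_biUnion hmem ⟨z, hz, ?_⟩)⟩
  simp only [add_sub_cancel_left, inv_smul_smul₀ hz]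

lemma homotopic_of_lineMap_mem {N V : Type*} [AddCommGroup V] [Module ℝ V] [TopologicalSpace V]
    [IsTopologicalAddGroup V] [ContinuousSMul ℝ V] {W : Set V} {y : W} (f g : Ω^ N W y)
    (h : ∀ (s : I^N) (t : I), AffineMap.lineMap (f s : V) (g s : V) (t : ℝ) ∈ W) :
    GenLoop.Homotopic f g := by
  have hf : Continuous fun s => (f s : V) := continuous_subtype_val.comp f.1.continuous
  have hg : Continuous fun s => (g s : V) := continuous_subtype_val.comp g.1.continuous
  refine ⟨{ toFun := fun z => ⟨AffineMap.lineMap (f z.2 : V) (g z.2 : V) (z.1 : ℝ), h z.2 z.1⟩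
            continuous_toFun := ?_
            map_zero_left := fun s => Subtype.ext (by simp)
            map_one_left := fun s => Subtype.ext (by simp)
            prop' := fun t s hs => Subtype.ext ?_ }⟩
  · refine Continuous.subtype_mk ?_ _
    simp only [AffineMap.lineMap_apply_module]
    exact ((continuous_const.sub (continuous_subtype_val.comp continuous_fst)).smul
      (hf.comp continuous_snd)).add
        ((continuous_subtype_val.comp continuous_fst).smul (hg.comp continuous_snd))
  · simp [GenLoop.boundary f s hs, GenLoop.boundary g s hs]

variable {N : Type*} [Fintype N]

lemma exists_contDiff_homotopic {W : Set E} (hW : IsOpen W) {y : W} (f : Ω^ N W y) (n : ℕ∞) :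
    ∃ (G : (N → ℝ) → E) (g : Ω^ N W y), ContDiff ℝ n G ∧
      (∀ s : I^N, (g s : E) = G fun i => s i) ∧ GenLoop.Homotopic f g := by
  have hf : Continuous fun s => (f s : E) := continuous_subtype_val.comp f.1.continuous
  obtain ⟨δ, hδ, hthick⟩ := (isCompact_range hf).exists_thickening_subset_open hW
    (range_subset_iff.2 fun s => (f s).2)
  let clamp (s : N → ℝ) : I^N := fun i => projIcc 0 1 zero_le_one (s i)
  have hclamp : Continuous clamp :=
    continuous_pi fun i => continuous_projIcc.comp (continuous_apply i)
  have clamp_coe (s : I^N) : clamp (fun i => s i) = s :=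
    funext fun i => projIcc_val zero_le_one (s i)
  -- Approximating `f - y` keeps the boundary value, since the support does not grow.
  obtain ⟨g, hg, hgf, hsupp⟩ := ((hf.comp hclamp).sub
    (continuous_const (y := (y : E)))).exists_contDiff_approx n
      (continuous_const (y := δ)) fun _ => hδ
  have hdist (s : I^N) : dist (f s : E) (g (fun i => s i) + y) < δ := by
    have h : dist (g fun i => s i) (f (clamp fun i => s i) - y) < δ := hgf _
    rwa [clamp_coe, dist_comm, ← dist_add_right _ _ (y : E), sub_add_cancel] at h
  have hline (s : I^N) (t : I) :
      AffineMap.lineMap (f s : E) (g (fun i => s i) + y) (t : ℝ) ∈ W := by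
    refine hthick (Metric.mem_thickening_iff.2 ⟨f s, mem_range_self s, ?_⟩)
    rw [dist_lineMap_left, Real.norm_of_nonneg t.2.1]
    exact (mul_le_of_le_one_left dist_nonneg t.2.2).trans_lt (hdist s)
  have hboundary (s : I^N) (hs : s ∈ Cube.boundary N) : g (fun i => s i) = 0 := by
    by_contra hne
    exact hsupp hne (by simp [clamp_coe, GenLoop.boundary f s hs])
  have hmem (s : I^N) : g (fun i => s i) + y ∈ W := by simpa using hline s 1
  have hcont : Continuous fun s : I^N => g (fun i => s i) + y :=
    (hg.continuous.comp (by fun_prop)).add continuous_const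
  refine ⟨fun s => g s + y, ⟨⟨fun s => ⟨_, hmem s⟩, hcont.subtype_mk _⟩, fun s hs =>
    Subtype.ext ?_⟩, hg.add contDiff_const, fun s => rfl, homotopic_of_lineMap_mem _ _ hline⟩
  simp [hboundary s hs]

lemma prod_mul_one_sub_eq_zero_iff {s : I^N} :
    ∏ i, (s i : ℝ) * (1 - s i) = 0 ↔ s ∈ Cube.boundary N := by
  simp only [Finset.prod_eq_zero_iff, Finset.mem_univ, true_and, mul_eq_zero, sub_eq_zero,
    Cube.boundary, mem_ofPred_eq, Subtype.ext_iff, Icc.coe_zero, Icc.coe_one,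
    eq_comm (a := (1 : ℝ))]

variable [FiniteDimensional ℝ E]

lemma homotopic_const_of_contDiff {F : Set E} (hF : F.Countable)
    (hN : Fintype.card N + 1 < finrank ℝ E) {y : ↥Fᶜ} (f : Ω^ N ↥Fᶜ y) {G : (N → ℝ) → E}
    (hG : ContDiff ℝ 1 G) (hfG : ∀ s : I^N, (f s : E) = G fun i => s i) :
    GenLoop.Homotopic f GenLoop.const := by
  -- The straight-line contraction to `y`, pushed off `F` in a generic direction, with a weight `ψ`
  -- that vanishes where the homotopy is prescribed.
  let h (z : ℝ × (N → ℝ)) : E := (1 - z.1) • G z.2 + z.1 • (y : E)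
  let ψ (z : ℝ × (N → ℝ)) : ℝ := z.1 * (1 - z.1) * ∏ i, z.2 i * (1 - z.2 i)
  have hh : ContDiff ℝ 1 h := by fun_prop
  have hψ : ContDiff ℝ 1 ψ :=
    ContDiff.mul (by fun_prop) (contDiff_prod fun i _ => by fun_prop)
  obtain ⟨v, hv⟩ := exists_forall_add_smul_notMem hh hψ hF <| by
    rwa [finrank_prod, finrank_self, finrank_fintype_fun_eq_card, add_comm]
  have h_boundary (t : ℝ) {s : I^N} (hs : s ∈ Cube.boundary N) : h (t, fun i => s i) = y := by
    simp only [h, ← hfG, GenLoop.boundary f s hs]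
    module
  have ψ_boundary (t : ℝ) {s : I^N} (hs : s ∈ Cube.boundary N) : ψ (t, fun i => s i) = 0 := by
    simp only [ψ, prod_mul_one_sub_eq_zero_iff.2 hs, mul_zero]
  have h_notMem (t : I) (s : I^N) (h0 : ψ (t, fun i => s i) = 0) :
      h (t, fun i => s i) ∉ F := by
    rcases mul_eq_zero.1 h0 with ht | hs
    · rcases mul_eq_zero.1 ht with ht | ht
      · have h_start : h (t, fun i => s i) = f s := by simp [h, show (t : ℝ) = 0 from ht, hfG]
        exact h_start ▸ (f s).2
      · have h_end : h (t, fun i => s i) = y := by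
          simp [h, show (t : ℝ) = 1 from (sub_eq_zero.1 ht).symm]
        exact h_end ▸ y.2
    · exact h_boundary t (prod_mul_one_sub_eq_zero_iff.1 hs) ▸ y.2
  have H_notMem (t : I) (s : I^N) :
      h (t, fun i => s i) + ψ (t, fun i => s i) • v ∉ F := by
    by_cases h0 : ψ (t, fun i => s i) = 0
    · simpa [h0] using h_notMem t s h0
    · exact hv _ h0
  have H_cont : Continuous fun z : I × (I^N) =>
      h (z.1, fun i => z.2 i) + ψ (z.1, fun i => z.2 i) • v :=
    (hh.continuous.add (hψ.continuous.smul continuous_const)).comp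
      (g := fun z => h z + ψ z • v) (f := fun z : I × (I^N) => ((z.1 : ℝ), fun i => (z.2 i : ℝ)))
      (by fun_prop)
  exact ⟨{ toFun := fun z => ⟨_, H_notMem z.1 z.2⟩
           continuous_toFun := H_cont.subtype_mk _
           map_zero_left := fun s => Subtype.ext (by simp [h, ψ, hfG])
           map_one_left := fun s => Subtype.ext (by simp [h, ψ])
           prop' := fun t s hs => Subtype.ext (by
            simp [h_boundary t hs, ψ_boundary t hs, GenLoop.boundary f s hs]) }⟩

theorem subsingleton_homotopyGroup_compl {F : Set E} (hF : F.Countable) (hF_closed : IsClosed F)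
    (hN : Fintype.card N + 1 < finrank ℝ E) (y : ↥Fᶜ) :
    Subsingleton (HomotopyGroup N ↥Fᶜ y) := by
  have homotopic_const (f : Ω^ N ↥Fᶜ y) : GenLoop.Homotopic f GenLoop.const := by
    obtain ⟨G, g, hG, hgG, hfg⟩ := exists_contDiff_homotopic hF_closed.isOpen_compl f 1
    exact hfg.trans (homotopic_const_of_contDiff hF hN g hG hgG)
  exact subsingleton_homotopyGroup_iff.2 fun f g =>
    (homotopic_const f).trans (homotopic_const g).symm

theorem spaceMConnected_compl (hE : 2 ≤ finrank ℝ E) {F : Set E} (hF : F.Countable)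
    (hF_closed : IsClosed F) : SpaceMConnected (finrank ℝ E - 2) ↥Fᶜ := by
  have hpath : IsPathConnected Fᶜ := hF.isPathConnected_compl_of_one_lt_rank <| by
    rw [← finrank_eq_rank]
    exact_mod_cast hE
  exact ⟨hpath.nonempty.to_subtype, isPathConnected_iff_pathConnectedSpace.1 hpath,
    fun k _ hk => subsingleton_homotopyGroup_compl hF hF_closed (by rw [Fintype.card_fin]; omega)⟩

lemma exists_isEmbedding_onePoint_range_eq_compl_singleton (c : OnePoint E) :
    ∃ φ : E → OnePoint E, IsEmbedding φ ∧ range φ = {c}ᶜ := by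
  let S := EuclideanSpace ℝ (Fin (finrank ℝ E + 1))
  have : Fact (finrank ℝ S = finrank ℝ E + 1) := ⟨finrank_euclideanSpace_fin⟩
  let e : OnePoint E ≃ₜ Metric.sphere (0 : S) 1 :=
    onePointEquivSphereOfFinrankEq (Fintype.card_fin _).symm
  have hv : ‖(e c : S)‖ = 1 := norm_eq_of_mem_sphere (e c)
  obtain ⟨L⟩ := FiniteDimensional.nonempty_continuousLinearEquiv_of_finrank_eq (𝕜 := ℝ) (E := E)
    (Submodule.finrank_orthogonal_span_singleton (𝕜 := ℝ)
      (norm_ne_zero_iff.1 (hv ▸ one_ne_zero))).symm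
  refine ⟨e.symm ∘ (stereographic hv).symm ∘ L, e.symm.isEmbedding.comp
    ((isOpenEmbedding_stereographic_symm hv).isEmbedding.comp L.toHomeomorph.isEmbedding), ?_⟩
  rw [range_comp, L.surjective.range_comp, range_stereographic_symm hv (e c).2,
    image_compl_eq e.symm.bijective, image_singleton, Subtype.coe_eta, e.symm_apply_apply]

theorem spaceMConnected_onePoint_compl (hE : 2 ≤ finrank ℝ E) {S : Set (OnePoint E)}
    (hS : S.Nonempty) (hS_countable : S.Countable) (hS_closed : IsClosed S) :
    SpaceMConnected (finrank ℝ E - 2) ↥Sᶜ := by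
  obtain ⟨c, hc⟩ := hS
  obtain ⟨φ, hφ, hrange⟩ := exists_isEmbedding_onePoint_range_eq_compl_singleton c
  have hsurj : Function.Surjective (Sᶜ.restrictPreimage φ) := fun z => by
    obtain ⟨x, hx⟩ : (z : OnePoint E) ∈ range φ := hrange ▸ fun h => z.2 (h ▸ hc)
    exact ⟨⟨x, mem_preimage.2 (hx ▸ z.2)⟩, Subtype.ext hx⟩
  exact (spaceMConnected_compl hE (hS_countable.preimage_of_injOn hφ.injective.injOn)
    (hS_closed.preimage hφ.continuous)).of_homeomorph
      ((hφ.restrictPreimage _).toHomeomorphOfSurjective hsurj)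

end CountableComplement

section RadialProjection

open Set Filter Topology Module
open scoped OnePoint

lemma tendsto_onePoint_infty_of_lt_dist {α E : Type*} [PseudoMetricSpace E] {l : Filter α}
    {f : α → OnePoint E} (p : E) (h : ∀ R : ℝ, ∀ᶠ a in l, ∀ y : E, f a = y → R < dist p y) :
    Tendsto f l (𝓝 ∞) := by
  refine OnePoint.hasBasis_nhds_infty.tendsto_right_iff.2 fun K ⟨_, hK⟩ => ?_
  obtain ⟨R, hR⟩ := hK.isBounded.subset_closedBall p
  filter_upwards [h R] with a ha
  rw [← OnePoint.compl_image_coe]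
  rintro ⟨y, hy, hya⟩
  exact (ha y hya.symm).not_ge (dist_comm p y ▸ hR hy)

lemma preimage_add_mem_nhds_zero {G : Type*} [TopologicalSpace G] [AddZeroClass G]
    [ContinuousAdd G] {C : Set G} {p : G} (hC : IsOpen C) (hp : p ∈ C) :
    (· + p) ⁻¹' C ∈ 𝓝 (0 : G) :=
  (hC.preimage (continuous_add_const p)).mem_nhds (by simpa using hp)

variable {E : Type*} [NormedAddCommGroup E] [NormedSpace ℝ E]

/-- The Minkowski functional of `C` seen from `p`, capped at `1` so that it is constant off `C`;
its inverse is the factor by which `radialProjection` stretches. -/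
noncomputable def cappedGauge (C : Set E) (p x : E) : ℝ := min (gauge ((· + p) ⁻¹' C) (x - p)) 1

/-- The radial projection of an open convex set `C` from its point `p` onto the frontier, extended
by the identity off `C`. A point whose ray from `p` never leaves `C` goes to `∞`, and so does `p`
itself, by convention. -/
noncomputable def radialProjection (C : Set E) (p : E) : OnePoint E → OnePoint E
  | ∞ => ∞
  | (x : E) => if cappedGauge C p x = 0 then ∞ else
      (AffineMap.lineMap p x (cappedGauge C p x)⁻¹ : E)

variable {C : Set E} {p x : E}

lemma radialProjection_of_cappedGauge_eq_zero (h : cappedGauge C p x = 0) :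
    radialProjection C p x = ∞ := if_pos h

lemma radialProjection_of_cappedGauge_ne_zero (h : cappedGauge C p x ≠ 0) :
    radialProjection C p x = (AffineMap.lineMap p x (cappedGauge C p x)⁻¹ : E) := if_neg h

lemma cappedGauge_nonneg : 0 ≤ cappedGauge C p x := le_min (gauge_nonneg _) zero_le_one

lemma tendsto_radialProjection_infty {l : Filter E}
    (h : Tendsto (fun z => cappedGauge C p z / dist p z) l (𝓝 0)) :
    Tendsto (fun z : E => radialProjection C p z) l (𝓝 ∞) := by
  refine tendsto_onePoint_infty_of_lt_dist p fun R => ?_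
  filter_upwards [h.eventually_lt_const (inv_pos.2 (by positivity : 0 < |R| + 1))] with z hz y hy
  have hne : cappedGauge C p z ≠ 0 := fun h0 =>
    OnePoint.infty_ne_coe y ((radialProjection_of_cappedGauge_eq_zero h0).symm.trans hy)
  rw [radialProjection_of_cappedGauge_ne_zero hne, OnePoint.coe_eq_coe] at hy
  have hpz : 0 < dist p z := dist_pos.2 fun h => hne (by simp [cappedGauge, h])
  have hg : 0 < cappedGauge C p z := cappedGauge_nonneg.lt_of_ne' hne
  calc R ≤ |R| := le_abs_self R
    _ < |R| + 1 := lt_add_one _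
    _ < (cappedGauge C p z / dist p z)⁻¹ := (lt_inv_comm₀ (by positivity) (by positivity)).1 hz
    _ = dist p y := by
      rw [← hy, dist_left_lineMap, norm_inv, Real.norm_of_nonneg hg.le, inv_div, div_eq_inv_mul]

lemma continuous_cappedGauge (hC : IsOpen C) (hconv : Convex ℝ C) (hp : p ∈ C) :
    Continuous (cappedGauge C p) :=
  ((continuous_gauge (hconv.translate_preimage_left p) (preimage_add_mem_nhds_zero hC hp)).comp
    (continuous_id.sub continuous_const)).min continuous_const

lemma cappedGauge_eq_gauge_of_mem (hx : x ∈ C) :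
    cappedGauge C p x = gauge ((· + p) ⁻¹' C) (x - p) :=
  min_eq_left (gauge_le_one_of_mem (by simpa using hx))

lemma cappedGauge_eq_one_of_notMem (hC : IsOpen C) (hconv : Convex ℝ C) (hp : p ∈ C)
    (hx : x ∉ C) : cappedGauge C p x = 1 := by
  refine min_eq_right (not_lt.1 fun h => hx ?_)
  simpa using interior_subset ((gauge_lt_one_iff_mem_interior (hconv.translate_preimage_left p)
    (preimage_add_mem_nhds_zero hC hp)).1 h)

lemma radialProjection_eq_self (hC : IsOpen C) (hconv : Convex ℝ C) (hp : p ∈ C) {z : OnePoint E}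
    (hz : z ∉ (↑) '' C) : radialProjection C p z = z := by
  induction z using OnePoint.rec with
  | infty => rfl
  | coe x =>
    have h1 := cappedGauge_eq_one_of_notMem hC hconv hp fun hx => hz (mem_image_of_mem _ hx)
    rw [radialProjection_of_cappedGauge_ne_zero (h1 ▸ one_ne_zero), h1, inv_one,
      AffineMap.lineMap_apply_one]

lemma lineMap_inv_cappedGauge_mem_frontier (hC : IsOpen C) (hconv : Convex ℝ C) (hp : p ∈ C)
    (hx : x ∈ C) (hg : cappedGauge C p x ≠ 0) :
    AffineMap.lineMap p x (cappedGauge C p x)⁻¹ ∈ frontier C := by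
  have hgauge : gauge ((· + p) ⁻¹' C) ((cappedGauge C p x)⁻¹ • (x - p)) = 1 := by
    rw [gauge_smul_of_nonneg (inv_nonneg.2 cappedGauge_nonneg), ← cappedGauge_eq_gauge_of_mem hx,
      smul_eq_mul, inv_mul_cancel₀ hg]
  have hfrontier := (gauge_eq_one_iff_mem_frontier (hconv.translate_preimage_left p)
    (preimage_add_mem_nhds_zero hC hp)).1 hgauge
  rwa [← Homeomorph.coe_addRight, ← Homeomorph.preimage_frontier] at hfrontier

lemma radialProjection_mem_insert_infty_frontier (hC : IsOpen C) (hconv : Convex ℝ C)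
    (hp : p ∈ C) (hx : x ∈ C) : radialProjection C p x ∈ insert ∞ ((↑) '' frontier C) := by
  by_cases hg : cappedGauge C p x = 0
  · exact .inl (radialProjection_of_cappedGauge_eq_zero hg)
  · rw [radialProjection_of_cappedGauge_ne_zero hg]
    exact .inr (mem_image_of_mem _ (lineMap_inv_cappedGauge_mem_frontier hC hconv hp hx hg))

lemma continuousAt_radialProjection_infty [FiniteDimensional ℝ E] :
    ContinuousAt (radialProjection C p) ∞ := by
  rw [OnePoint.continuousAt_infty', coclosedCompact_eq_cocompact]
  have hdist : Tendsto (fun z => (dist p z)⁻¹) (cocompact E) (𝓝 0) :=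
    (tendsto_dist_left_cocompact_atTop p).inv_tendsto_atTop
  refine tendsto_radialProjection_infty (squeeze_zero (fun z => ?_) (fun z => ?_) hdist)
  · exact div_nonneg cappedGauge_nonneg dist_nonneg
  · exact (div_le_div_of_nonneg_right (min_le_right _ _) dist_nonneg).trans_eq (one_div _)

lemma continuousAt_radialProjection_coe (hC : IsOpen C) (hconv : Convex ℝ C) (hp : p ∈ C)
    (hx : x ≠ p) : ContinuousAt (radialProjection C p) x := by
  have hcont := (continuous_cappedGauge hC hconv hp).continuousAt (x := x)
  rw [OnePoint.continuousAt_coe]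
  by_cases hg : cappedGauge C p x = 0
  · have hdiv : Tendsto (fun z => cappedGauge C p z / dist p z) (𝓝 x) (𝓝 0) := by
      have hquot : ContinuousAt (fun z => cappedGauge C p z / dist p z) x :=
        ContinuousAt.div hcont (by fun_prop) (dist_ne_zero.2 hx.symm)
      simpa only [hg, zero_div] using hquot.tendsto
    rw [ContinuousAt, Function.comp_apply, radialProjection_of_cappedGauge_eq_zero hg]
    exact tendsto_radialProjection_infty hdiv
  · have hline : ContinuousAt (fun z => AffineMap.lineMap p z (cappedGauge C p z)⁻¹) x := by
      simp only [AffineMap.lineMap_apply_module']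
      exact ((hcont.inv₀ hg).smul (continuousAt_id.sub continuousAt_const)).add continuousAt_const
    refine (OnePoint.continuous_coe.continuousAt.comp hline).congr ?_
    filter_upwards [hcont.eventually_ne hg] with z hz
    exact (radialProjection_of_cappedGauge_ne_zero hz).symm

lemma continuousAt_radialProjection [FiniteDimensional ℝ E] (hC : IsOpen C) (hconv : Convex ℝ C)
    (hp : p ∈ C) {z : OnePoint E} (hz : z ≠ p) : ContinuousAt (radialProjection C p) z := by
  induction z using OnePoint.rec with
  | infty => exact continuousAt_radialProjection_infty
  | coe x => exact continuousAt_radialProjection_coe hC hconv hp fun h => hz (congrArg _ h)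

end RadialProjection

section ConvexCells

open Set Filter Topology Module
open scoped OnePoint

lemma exists_glue_continuousAt {ι Y : Type*} [Finite ι] [TopologicalSpace Y] {U : ι → Set Y}
    (hU : ∀ i, IsOpen (U i)) (hdisj : Pairwise fun i j => Disjoint (U i) (U j)) {P : Set Y}
    {σ : ι → Y → Y} (hσ : ∀ i, ∀ z ∉ P, ContinuousAt (σ i) z) (hσU : ∀ i, ∀ z ∉ U i, σ i z = z) :
    ∃ ρ : Y → Y, (∀ z ∉ P, ContinuousAt ρ z) ∧ (∀ i, EqOn ρ (σ i) (U i)) ∧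
      ∀ z ∉ ⋃ i, U i, ρ z = z := by
  classical
  let ρ (z : Y) : Y := if h : ∃ i, z ∈ U i then σ h.choose z else z
  have ρ_eqOn (i : ι) : EqOn ρ (σ i) (U i) := fun z hz => by
    have h : ∃ i, z ∈ U i := ⟨i, hz⟩
    have hi : h.choose = i := hdisj.eq (not_disjoint_iff.2 ⟨z, h.choose_spec, hz⟩)
    simp only [ρ, dif_pos h, hi]
  have ρ_eq_self (z : Y) (hz : z ∉ ⋃ i, U i) : ρ z = z := dif_neg (by simpa using hz)
  refine ⟨ρ, fun z hzP => ?_, ρ_eqOn, ρ_eq_self⟩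
  by_cases hz : z ∈ ⋃ i, U i
  · obtain ⟨i, hi⟩ := mem_iUnion.1 hz
    exact (hσ i z hzP).congr ((ρ_eqOn i).symm.eventuallyEq_of_mem ((hU i).mem_nhds hi))
  · rw [ContinuousAt, ρ_eq_self z hz]
    intro V hV
    have hσV (i : ι) : ∀ᶠ w in 𝓝 z, σ i w ∈ V :=
      hσ i z hzP ((hσU i z fun hi => hz (mem_iUnion_of_mem i hi)).symm ▸ hV)
    refine mem_map.2 ?_
    filter_upwards [hV, eventually_all.2 hσV] with w hwV hwσ
    by_cases hw : w ∈ ⋃ i, U i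
    · obtain ⟨i, hi⟩ := mem_iUnion.1 hw
      exact mem_preimage.2 (ρ_eqOn i hi ▸ hwσ i)
    · exact mem_preimage.2 ((ρ_eq_self w hw).symm ▸ hwV)

lemma nonempty_homeomorph_onePoint_compl {Z : Type*} [TopologicalSpace Z] [T2Space Z]
    [LocallyCompactSpace Z] {U : Set Z} (hU : IsOpen U) :
    Nonempty (OnePoint ↥Uᶜ ≃ₜ ↥((↑) '' U : Set (OnePoint Z))ᶜ) := by
  have : CompactSpace ↥((↑) '' U : Set (OnePoint Z))ᶜ := isCompact_iff_compactSpace.1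
    (OnePoint.isOpen_image_coe.2 hU).isClosed_compl.isCompact
  let f (x : ↥Uᶜ) : ↥((↑) '' U : Set (OnePoint Z))ᶜ :=
    ⟨(x : Z), fun ⟨y, hy, hyx⟩ => x.2 (OnePoint.coe_injective hyx ▸ hy)⟩
  have hf : IsEmbedding f := .of_comp
    ((OnePoint.continuous_coe.comp continuous_subtype_val).subtype_mk _) continuous_subtype_val
    (OnePoint.isOpenEmbedding_coe.isEmbedding.comp IsEmbedding.subtypeVal)
  refine ⟨OnePoint.equivOfIsEmbeddingOfRangeEq ⟨∞, OnePoint.infty_notMem_image_coe⟩ f hf ?_⟩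
  ext ⟨z, hz⟩
  induction z using OnePoint.rec with
  | infty => simp [f]
  | coe x => simpa [f] using hz

lemma disjoint_frontier_iUnion {ι Y : Type*} [TopologicalSpace Y] {C : ι → Set Y}
    (hC : ∀ i, IsOpen (C i)) (hdisj : Pairwise fun i j => Disjoint (C i) (C j)) (i : ι) :
    Disjoint (frontier (C i)) (⋃ j, C j) := by
  refine disjoint_iUnion_right.2 fun j => ?_
  rcases eq_or_ne i j with rfl | hij
  · exact (disjoint_iff_inter_eq_empty.2 (hC i).inter_frontier_eq).symm
  · exact (hdisj hij).frontier_left (hC j)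

variable {E : Type*} [NormedAddCommGroup E] [NormedSpace ℝ E] [FiniteDimensional ℝ E]
  {ι : Type*} [Finite ι] {C : ι → Set E}

lemma exists_continuousOn_retraction_compl_iUnion (hC : ∀ i, IsOpen (C i))
    (hconv : ∀ i, Convex ℝ (C i)) (hdisj : Pairwise fun i j => Disjoint (C i) (C j)) {p : ι → E}
    (hp : ∀ i, p i ∈ C i) :
    ∃ ρ : OnePoint E → OnePoint E, ContinuousOn ρ (range fun i => (p i : OnePoint E))ᶜ ∧
      (∀ z, ρ z ∉ ((↑) '' ⋃ i, C i : Set (OnePoint E))) ∧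
      ∀ z ∉ ((↑) '' ⋃ i, C i : Set (OnePoint E)), ρ z = z := by
  obtain ⟨ρ, hρ_cont, hρ_cell, hρ_compl⟩ := exists_glue_continuousAt
    (P := range fun i => (p i : OnePoint E)) (σ := fun i => radialProjection (C i) (p i))
    (fun i => OnePoint.isOpen_image_coe.2 (hC i))
    (fun i j hij => (disjoint_image_iff OnePoint.coe_injective).2 (hdisj hij))
    (fun i z hz => continuousAt_radialProjection (hC i) (hconv i) (hp i) fun h => hz ⟨i, h.symm⟩)
    (fun i z hz => radialProjection_eq_self (hC i) (hconv i) (hp i) hz)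
  rw [← image_iUnion] at hρ_compl
  refine ⟨ρ, fun z hz => (hρ_cont z hz).continuousWithinAt, fun z => ?_, hρ_compl⟩
  by_cases hz : z ∈ (↑) '' ⋃ i, C i
  · obtain ⟨x, hx, rfl⟩ := hz
    obtain ⟨i, hi⟩ := mem_iUnion.1 hx
    rw [hρ_cell i (mem_image_of_mem _ hi)]
    rcases radialProjection_mem_insert_infty_frontier (hC i) (hconv i) (hp i) hi with h | ⟨y, hy, h⟩
    · exact h ▸ OnePoint.infty_notMem_image_coe
    · exact h ▸ OnePoint.coe_injective.mem_set_image.not.2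
        (disjoint_left.1 (disjoint_frontier_iUnion hC hdisj i) hy)
  · rwa [hρ_compl z hz]

theorem spaceMConnected_onePoint_compl_iUnion [Nonempty ι] (hE : 2 ≤ finrank ℝ E)
    (hC : ∀ i, IsOpen (C i)) (hconv : ∀ i, Convex ℝ (C i)) (hne : ∀ i, (C i).Nonempty)
    (hdisj : Pairwise fun i j => Disjoint (C i) (C j)) :
    SpaceMConnected (finrank ℝ E - 2) (OnePoint ↥(⋃ i, C i)ᶜ) := by
  choose p hp using hne
  obtain ⟨ρ, hρ_cont, hρ_mem, hρ_self⟩ :=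
    exists_continuousOn_retraction_compl_iUnion hC hconv hdisj hp
  let P : Set (OnePoint E) := range fun i => (p i : OnePoint E)
  let S : Set (OnePoint E) := (↑) '' ⋃ i, C i
  have hP : P.Finite := finite_range _
  have hPS : P ⊆ S := range_subset_iff.2 fun i => mem_image_of_mem _ (mem_iUnion_of_mem i (hp i))
  let J : C(↥Sᶜ, ↥Pᶜ) := .inclusion (compl_subset_compl.2 hPS)
  let R : C(↥Pᶜ, ↥Sᶜ) := ⟨fun z => ⟨ρ z, hρ_mem z⟩, hρ_cont.domRestrict.subtype_mk _⟩
  have hRJ : Function.LeftInverse R J := fun z => Subtype.ext (hρ_self z z.2)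
  obtain ⟨e⟩ := nonempty_homeomorph_onePoint_compl (isOpen_iUnion hC)
  exact ((spaceMConnected_onePoint_compl hE (range_nonempty _) hP.countable
    hP.isClosed).of_leftInverse hRJ).of_homeomorph e.symm

end ConvexCells

section BendLocus

open Set Filter Topology

variable {d r : ℕ} (b : Fin r → EuclideanSpace ℝ (Fin d)) (a : Fin r → ℝ)

/-- The open region on which the `i`-th affine piece of a convex PL function is maximal. It is empty
when that piece is redundant, and two regions coincide when their pieces do. -/
def plCell (i : Fin r) : Set (EuclideanSpace ℝ (Fin d)) :=
  interior {x | ∀ j, ⟪x, b j⟫ + a j ≤ ⟪x, b i⟫ + a i}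

/-- The nonempty cells, whose union is the complement of the bend locus. They form a set of sets, so
that the cell of a piece occurring twice is counted once. -/
def plCells : Set (Set (EuclideanSpace ℝ (Fin d))) :=
  {C ∈ range (plCell b a) | C.Nonempty}

variable {b a} {x : EuclideanSpace ℝ (Fin d)} {i j : Fin r}

lemma le_plMax (x : EuclideanSpace ℝ (Fin d)) (i : Fin r) : ⟪x, b i⟫ + a i ≤ plMax b a x :=
  le_ciSup (f := fun i => ⟪x, b i⟫ + a i) (finite_range _).bddAbove i

lemma plMax_eq_of_forall_le (h : ∀ j, ⟪x, b j⟫ + a j ≤ ⟪x, b i⟫ + a i) :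
    plMax b a x = ⟪x, b i⟫ + a i :=
  have : Nonempty (Fin r) := ⟨i⟩
  (ciSup_le h).antisymm (le_plMax x i)

lemma hasFDerivAt_inner_add_const {E : Type*} [NormedAddCommGroup E] [InnerProductSpace ℝ E]
    (v : E) (c : ℝ) (x : E) : HasFDerivAt (fun x => ⟪x, v⟫ + c) (innerSL ℝ v) x := by
  simpa only [real_inner_comm, innerSL_apply_apply] using
    ((innerSL ℝ v).hasFDerivAt (x := x)).add_const c

lemma plMax_eventuallyEq_of_mem_plCell (hx : x ∈ plCell b a i) :
    plMax b a =ᶠ[𝓝 x] fun x => ⟪x, b i⟫ + a i := by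
  filter_upwards [mem_interior_iff_mem_nhds.1 hx] with z hz using plMax_eq_of_forall_le hz

lemma differentiableAt_plMax_of_mem_plCell (hx : x ∈ plCell b a i) :
    DifferentiableAt ℝ (plMax b a) x :=
  (hasFDerivAt_inner_add_const (b i) (a i) x).differentiableAt.congr_of_eventuallyEq
    (plMax_eventuallyEq_of_mem_plCell hx)

lemma fderiv_plMax_of_eq (hd : DifferentiableAt ℝ (plMax b a) x)
    (hi : plMax b a x = ⟪x, b i⟫ + a i) : fderiv ℝ (plMax b a) x = innerSL ℝ (b i) := by
  -- The difference is minimal at `x`, so its derivative vanishes.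
  have hmin : IsLocalMin (fun z => plMax b a z - (⟪z, b i⟫ + a i)) x :=
    .of_forall fun z => by simpa only [hi, sub_self, sub_nonneg] using le_plMax z i
  exact sub_eq_zero.1 (hmin.hasFDerivAt_eq_zero
    (hd.hasFDerivAt.sub (hasFDerivAt_inner_add_const (b i) (a i) x)))

lemma affinePiece_eq_of_differentiableAt (hd : DifferentiableAt ℝ (plMax b a) x)
    (hi : plMax b a x = ⟪x, b i⟫ + a i) (hj : plMax b a x = ⟪x, b j⟫ + a j) :
    b i = b j ∧ a i = a j := by
  have hb : b i = b j := ext_inner_right ℝ fun v =>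
    congrArg (fun L => L v) ((fderiv_plMax_of_eq hd hi).symm.trans (fderiv_plMax_of_eq hd hj))
  exact ⟨hb, add_left_cancel (hb ▸ hi.symm.trans hj)⟩

lemma differentiableAt_plMax_iff [NeZero r] :
    DifferentiableAt ℝ (plMax b a) x ↔ ∃ i, x ∈ plCell b a i := by
  refine ⟨fun hd => ?_, fun ⟨i, hi⟩ => differentiableAt_plMax_of_mem_plCell hi⟩
  obtain ⟨i, hi⟩ : ∃ i, ⟪x, b i⟫ + a i = plMax b a x :=
    exists_eq_ciSup_of_finite (f := fun i => ⟪x, b i⟫ + a i)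
  refine ⟨i, mem_interior_iff_mem_nhds.2 (eventually_all.2 fun j => ?_)⟩
  rcases (le_plMax x j).eq_or_lt with hj | hj
  · obtain ⟨hb, ha⟩ := affinePiece_eq_of_differentiableAt hd hi.symm hj.symm
    exact .of_forall fun z => by rw [hb, ha]
  · have hlt : ∀ᶠ z in 𝓝 x, ⟪z, b j⟫ + a j < ⟪z, b i⟫ + a i :=
      (Continuous.tendsto (by fun_prop) x).eventually_lt (Continuous.tendsto (by fun_prop) x)
        (hi ▸ hj)
    exact hlt.mono fun z => le_of_lt

lemma convex_plCell (i : Fin r) : Convex ℝ (plCell b a i) := by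
  refine Convex.interior ?_
  rw [ofPred_forall]
  refine convex_iInter fun j => ?_
  have h_halfSpace : {x : EuclideanSpace ℝ (Fin d) | ⟪x, b j⟫ + a j ≤ ⟪x, b i⟫ + a i} =
      {x | innerSL ℝ (b j - b i) x ≤ a i - a j} := by
    ext x
    rw [mem_ofPred_eq, mem_ofPred_eq, innerSL_apply_apply, inner_sub_left, real_inner_comm x,
      real_inner_comm x, sub_le_sub_iff, add_comm (a i)]
  rw [h_halfSpace]
  exact convex_halfSpace_le (innerSL ℝ (b j - b i)).isLinear _

lemma exists_plCell_nonempty [NeZero r] : ∃ i, (plCell b a i).Nonempty := by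
  refine nonempty_interior_of_iUnion_of_closed (fun i => ?_) (eq_univ_of_forall fun x => ?_)
  · rw [ofPred_forall]
    exact isClosed_iInter fun j => isClosed_le (by fun_prop) (by fun_prop)
  · exact mem_iUnion.2 (Finite.exists_max fun i => ⟪x, b i⟫ + a i)

lemma plCell_eq_of_mem (hi : x ∈ plCell b a i) (hj : x ∈ plCell b a j) :
    plCell b a i = plCell b a j := by
  obtain ⟨hb, ha⟩ := affinePiece_eq_of_differentiableAt (differentiableAt_plMax_of_mem_plCell hi)
    (plMax_eventuallyEq_of_mem_plCell hi).self_of_nhds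
    (plMax_eventuallyEq_of_mem_plCell hj).self_of_nhds
  rw [plCell, plCell, hb, ha]

instance finite_plCells : Finite (plCells b a) :=
  ((finite_range _).subset (sep_subset _ _)).to_subtype

instance nonempty_plCells [NeZero r] : Nonempty (plCells b a) :=
  exists_plCell_nonempty.elim fun i hi => ⟨⟨_, ⟨i, rfl⟩, hi⟩⟩

lemma isOpen_of_mem_plCells {C : Set (EuclideanSpace ℝ (Fin d))} (hC : C ∈ plCells b a) :
    IsOpen C := by
  obtain ⟨⟨i, rfl⟩, -⟩ := hC
  exact isOpen_interior

lemma convex_of_mem_plCells {C : Set (EuclideanSpace ℝ (Fin d))} (hC : C ∈ plCells b a) :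
    Convex ℝ C := by
  obtain ⟨⟨i, rfl⟩, -⟩ := hC
  exact convex_plCell i

lemma pairwise_disjoint_plCells :
    Pairwise fun C D : plCells b a => Disjoint (C : Set (EuclideanSpace ℝ (Fin d))) D := by
  rintro ⟨_, ⟨i, rfl⟩, _⟩ ⟨_, ⟨j, rfl⟩, _⟩ hij
  exact disjoint_left.2 fun x hi hj => hij (Subtype.ext (plCell_eq_of_mem hi hj))

lemma bendLocus_eq_compl_iUnion_plCells [NeZero r] :
    bendLocus b a = (⋃ C : plCells b a, (C : Set (EuclideanSpace ℝ (Fin d))))ᶜ := by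
  ext x
  rw [bendLocus, mem_ofPred_eq, differentiableAt_plMax_iff, mem_compl_iff, not_iff_not, mem_iUnion]
  constructor
  · rintro ⟨i, hi⟩
    exact ⟨⟨_, ⟨i, rfl⟩, x, hi⟩, hi⟩
  · rintro ⟨⟨_, ⟨i, rfl⟩, _⟩, hi⟩
    exact ⟨i, hi⟩

end BendLocus

/-- For `d ≥ 2`, the one-point compactification of a nonempty polyhedral hypersurface in
`ℝ^d` (the bend locus of a convex PL function) is `(d - 2)`-connected. -/
theorem onePoint_hypersurface_connected (d r : ℕ) (hd : 2 ≤ d) (hr : 1 ≤ r)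
    (b : Fin r → EuclideanSpace ℝ (Fin d)) (a : Fin r → ℝ)
    (hne : (bendLocus b a).Nonempty) :
    SpaceMConnected (d - 2) (OnePoint ↥(bendLocus b a)) := by
  have : NeZero r := ⟨by omega⟩
  have hfinrank : Module.finrank ℝ (EuclideanSpace ℝ (Fin d)) = d := finrank_euclideanSpace_fin
  have hcells := spaceMConnected_onePoint_compl_iUnion (hfinrank.symm ▸ hd)
    (fun C : plCells b a => isOpen_of_mem_plCells C.2) (fun C => convex_of_mem_plCells C.2)
    (fun C => C.2.2) pairwise_disjoint_plCells
  rwa [← bendLocus_eq_compl_iUnion_plCells, hfinrank] at hcells
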